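/- 9746347772161 is a Carmichael number with exactly 9 distinct prime factors, and it is the smallest such: every Carmichael number with exactly 9 distinct prime factors is at least 9746347772161. -/

import Mathlib

/-- A Carmichael number: a composite natural number `N` such that
`b ^ (N - 1) ≡ 1 [MOD N]` for every `b` coprime to `N`. -/
def IsCarmichael (N : ℕ) : Prop :=
  1 < N ∧ ¬ N.Prime ∧ ∀ b : ℕ, Nat.Coprime b N → b ^ (N - 1) ≡ 1 [MOD N]

/-!
By Korselt's criterion a Carmichael number is a squarefree composite `N` such that `q - 1 ∣ N - 1`
for every prime factor `q`. Hence a product `P` of prime factors of `N` is coprime to `q - 1` for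
every prime factor `q`. This leaves so few candidates that all increasing sequences of nine primes
with product below the bound can be enumerated: a partial product `P` with `k` primes still to be
chosen, all of them at least `p`, is abandoned as soon as `P * p ^ k` reaches the bound.
-/

open ArithmeticFunction
open scoped Finset

theorem coprime_self_sub_one {n : ℕ} (hn : n ≠ 0) : n.Coprime (n - 1) :=
  (Nat.coprime_self_sub_right (Nat.one_le_iff_ne_zero.2 hn)).2 (Nat.coprime_one_right n)

section Korselt

theorem forall_coprime_pow_modEq_one_iff {N n : ℕ} [NeZero N] :
    (∀ b : ℕ, b.Coprime N → b ^ n ≡ 1 [MOD N]) ↔ carmichael N ∣ n := by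
  rw [carmichael_eq_exponent', Monoid.exponent_dvd_iff_forall_pow_eq_one]
  constructor
  · intro h u
    have hu := (ZMod.natCast_eq_natCast_iff _ _ _).2 (h _ (ZMod.val_coe_unit_coprime u))
    ext
    simpa using hu
  · intro h b hb
    rw [← ZMod.natCast_eq_natCast_iff]
    simpa using congrArg Units.val (h (ZMod.unitOfCoprime b hb))

theorem carmichael_prime_pow_of_le_two {p n : ℕ} (hp : p.Prime) (hn : n ≤ 2) :
    carmichael (p ^ n) = (p ^ n).totient := by
  obtain rfl | hp2 := eq_or_ne p 2
  · exact carmichael_two_pow_of_le_two_eq_totient hn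
  · exact carmichael_pow_of_prime_ne_two n hp hp2

theorem carmichael_prime {p : ℕ} (hp : p.Prime) : carmichael p = p - 1 := by
  simpa [Nat.totient_prime hp] using carmichael_prime_pow_of_le_two hp one_le_two

theorem squarefree_of_carmichael_dvd_sub_one {N : ℕ} (hN : N ≠ 0) (h : carmichael N ∣ N - 1) :
    Squarefree N := by
  rw [Nat.squarefree_iff_prime_squarefree]
  intro p hp hpp
  have hp_dvd_carmichael : p ∣ carmichael (p ^ 2) := by
    rw [carmichael_prime_pow_of_le_two hp le_rfl, Nat.totient_prime_pow hp two_pos]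
    simp
  have hp_dvd_sub_one : p ∣ N - 1 :=
    hp_dvd_carmichael.trans ((carmichael_dvd (sq p ▸ hpp)).trans h)
  exact Nat.not_coprime_of_dvd_of_dvd hp.one_lt (dvd_of_mul_left_dvd hpp) hp_dvd_sub_one
    (coprime_self_sub_one hN)

theorem carmichael_dvd_sub_one_iff {N : ℕ} (hN : N ≠ 0) :
    carmichael N ∣ N - 1 ↔ Squarefree N ∧ ∀ p ∈ N.primeFactors, p - 1 ∣ N - 1 := by
  constructor
  · refine fun h ↦ ⟨squarefree_of_carmichael_dvd_sub_one hN h, fun p hp ↦ ?_⟩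
    rw [← carmichael_prime (Nat.prime_of_mem_primeFactors hp)]
    exact (carmichael_dvd (Nat.dvd_of_mem_primeFactors hp)).trans h
  · rintro ⟨hsq, h⟩
    have : NeZero N := ⟨hN⟩
    rw [carmichael_factorization]
    refine Finset.lcm_dvd fun p hp ↦ ?_
    have hpr := Nat.prime_of_mem_primeFactors hp
    rw [Nat.factorization_eq_one_of_squarefree hsq hpr (Nat.dvd_of_mem_primeFactors hp), pow_one,
      carmichael_prime hpr]
    exact h p hp

theorem isCarmichael_iff_korselt {N : ℕ} :
    IsCarmichael N ↔
      1 < N ∧ ¬N.Prime ∧ Squarefree N ∧ ∀ p ∈ N.primeFactors, p - 1 ∣ N - 1 := by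
  refine and_congr_right fun hN ↦ and_congr_right fun _ ↦ ?_
  have : NeZero N := ⟨by lia⟩
  rw [forall_coprime_pow_modEq_one_iff, carmichael_dvd_sub_one_iff (NeZero.ne N)]

end Korselt

section Search

/-- Exhaustive search for squarefree numbers below `B` satisfying Korselt's criterion; the value
`true` certifies that there are none extending the current state. In that state the primes below
`p` have been decided, the chosen ones have product `P`, the numbers `q - 1` for the chosen `q`
have least common multiple `L`, and `k` primes remain to be chosen. Instead of testing `p` for
primality, the search skips it when `gcd p m` is neither `1` nor `p`. If the recursion exhausts
`fuel`, the value is `false`. -/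
def korseltSearch (B m : ℕ) : (fuel k P L p : ℕ) → Bool
  | _, 0, P, L, _ => ¬L ∣ P - 1
  | 0, _ + 1, _, _, _ => false
  | fuel + 1, k + 1, P, L, p =>
    B ≤ P * p ^ (k + 1) ||
      (¬((p.Coprime m ∨ p ∣ m) ∧ P.Coprime (p * (p - 1))) ||
          korseltSearch B m fuel k (P * p) (L.lcm (p - 1)) (p + 1)) &&
        korseltSearch B m fuel (k + 1) P L (p + 1)

theorem filter_lt_succ_of_mem {T : Finset ℕ} {p : ℕ} (hp : p ∈ T) :
    {q ∈ T | q < p + 1} = insert p {q ∈ T | q < p} := by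
  grind

theorem filter_lt_succ_of_notMem {T : Finset ℕ} {p : ℕ} (hp : p ∉ T) :
    {q ∈ T | q < p + 1} = {q ∈ T | q < p} := by
  grind

theorem filter_succ_le_of_notMem {T : Finset ℕ} {p : ℕ} (hp : p ∉ T) :
    {q ∈ T | p + 1 ≤ q} = {q ∈ T | p ≤ q} := by
  grind

theorem card_filter_succ_le_of_mem {T : Finset ℕ} {p : ℕ} (hp : p ∈ T) :
    #{q ∈ T | p ≤ q} = #{q ∈ T | p + 1 ≤ q} + 1 := by
  have h : {q ∈ T | p ≤ q} = insert p {q ∈ T | p + 1 ≤ q} := by grind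
  rw [h, Finset.card_insert_of_notMem (by simp)]

theorem prod_filter_lt_mul_pow_card_le (T : Finset ℕ) (p : ℕ) :
    (∏ q ∈ T with q < p, q) * p ^ #{q ∈ T | p ≤ q} ≤ ∏ q ∈ T, q := by
  rw [← Finset.prod_filter_mul_prod_filter_not T (· < p)]
  simp only [not_lt]
  gcongr
  exact Finset.pow_card_le_prod _ _ _ (by simp)

variable {T : Finset ℕ}

theorem coprime_prod_filter_lt (hT : ∀ q ∈ T, q.Prime)
    (hK : ∀ q ∈ T, q - 1 ∣ (∏ r ∈ T, r) - 1) {p : ℕ} (hp : p ∈ T) :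
    (∏ q ∈ T with q < p, q).Coprime (p * (p - 1)) := by
  refine Nat.Coprime.mul_right (Nat.Coprime.prod_left fun q hq ↦ ?_) ?_
  · rw [Finset.mem_filter] at hq
    exact (Nat.coprime_primes (hT q hq.1) (hT p hp)).2 hq.2.ne
  · have hprod : ∏ r ∈ T, r ≠ 0 := Finset.prod_ne_zero_iff.2 fun q hq ↦ (hT q hq).ne_zero
    have hdvd : ∏ q ∈ T with q < p, q ∣ ∏ r ∈ T, r :=
      Finset.prod_dvd_prod_of_subset _ _ _ (Finset.filter_subset _ _)
    exact ((coprime_self_sub_one hprod).coprime_dvd_left hdvd).coprime_dvd_right (hK p hp)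

theorem card_filter_le_ne_zero_of_korseltSearch {B m fuel p : ℕ}
    (hK : ∀ q ∈ T, q - 1 ∣ (∏ r ∈ T, r) - 1)
    (h : korseltSearch B m fuel #{q ∈ T | p ≤ q} (∏ q ∈ T with q < p, q)
      (Finset.lcm {q ∈ T | q < p} (· - 1)) p = true) :
    #{q ∈ T | p ≤ q} ≠ 0 := by
  intro hcard
  have hlt : {q ∈ T | q < p} = T := by simpa using hcard
  rw [hcard, hlt] at h
  simp only [korseltSearch, decide_eq_true_eq] at h
  exact h (Finset.lcm_dvd hK)

theorem le_prod_of_korseltSearch {B m : ℕ} (hT : ∀ q ∈ T, q.Prime)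
    (hK : ∀ q ∈ T, q - 1 ∣ (∏ r ∈ T, r) - 1) (fuel p : ℕ)
    (h : korseltSearch B m fuel #{q ∈ T | p ≤ q} (∏ q ∈ T with q < p, q)
      (Finset.lcm {q ∈ T | q < p} (· - 1)) p = true) :
    B ≤ ∏ q ∈ T, q := by
  induction fuel generalizing p with
  | zero =>
    obtain ⟨k, hk⟩ := Nat.exists_eq_succ_of_ne_zero (card_filter_le_ne_zero_of_korseltSearch hK h)
    simp [hk, korseltSearch] at h
  | succ fuel ih =>
    obtain ⟨k, hk⟩ := Nat.exists_eq_succ_of_ne_zero (card_filter_le_ne_zero_of_korseltSearch hK h)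
    rw [hk] at h
    simp only [korseltSearch, Bool.or_eq_true, Bool.and_eq_true, decide_eq_true_eq] at h
    obtain hprune | ⟨hchoose, hskip⟩ := h
    · exact hprune.trans (by simpa only [hk] using prod_filter_lt_mul_pow_card_le T p)
    by_cases hp : p ∈ T
    · have hadmissible := And.intro (Nat.coprime_or_dvd_of_prime (hT p hp) m)
        (coprime_prod_filter_lt hT hK hp)
      refine ih (p + 1) ?_
      have hcard := (card_filter_succ_le_of_mem hp).symm.trans hk
      rw [filter_lt_succ_of_mem hp, Finset.prod_insert (by simp), Finset.lcm_insert,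
        Nat.succ_injective hcard, mul_comm, lcm_comm]
      exact hchoose.resolve_left (not_not_intro hadmissible)
    · refine ih (p + 1) ?_
      rwa [filter_lt_succ_of_notMem hp, filter_succ_le_of_notMem hp, hk]

theorem IsCarmichael.le_of_korseltSearch {B m fuel N : ℕ} (hN : IsCarmichael N)
    (h : korseltSearch B m fuel N.primeFactors.card 1 1 2 = true) : B ≤ N := by
  obtain ⟨-, -, hsq, hK⟩ := isCarmichael_iff_korselt.1 hN
  have hprod := Nat.prod_primeFactors_of_squarefree hsq
  have htwo : ∀ q ∈ N.primeFactors, 2 ≤ q := fun q hq ↦ (Nat.prime_of_mem_primeFactors hq).two_le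
  have hlt : {q ∈ N.primeFactors | q < 2} = ∅ :=
    Finset.filter_false_of_mem fun q hq ↦ (htwo q hq).not_gt
  rw [← hprod]
  refine le_prod_of_korseltSearch (m := m) (fun q ↦ Nat.prime_of_mem_primeFactors)
    (by rwa [hprod]) fuel 2 ?_
  rwa [Finset.filter_true_of_mem htwo, hlt]

-- The largest `p` reached is 1321; sieving by `210 = 2 * 3 * 5 * 7` leaves about `10 ^ 5` states.
theorem korseltSearch_nine : korseltSearch 9746347772161 210 1400 9 1 1 2 = true := by
  decide +kernel

end Search

theorem primeFactors_9746347772161 :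
    Nat.primeFactors 9746347772161 = {7, 11, 13, 17, 19, 31, 37, 41, 641} := by
  simp [Nat.primeFactors]

theorem isCarmichael_9746347772161 : IsCarmichael 9746347772161 := by
  rw [isCarmichael_iff_korselt, primeFactors_9746347772161]
  refine ⟨by norm_num, by norm_num, ?_, by decide⟩
  simp [Nat.squarefree_iff_nodup_primeFactorsList]

theorem carmichael_smallest_with_9_prime_factors :
    IsCarmichael 9746347772161 ∧ (Nat.primeFactors 9746347772161).card = 9 ∧
      ∀ N : ℕ, IsCarmichael N → N.primeFactors.card = 9 → 9746347772161 ≤ N := by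
  refine ⟨isCarmichael_9746347772161, by rw [primeFactors_9746347772161]; rfl, fun N hN hcard ↦ ?_⟩
  exact hN.le_of_korseltSearch (hcard ▸ korseltSearch_nine)
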